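/- arXiv:1004.5297 — 2 statements merged into one kernel-verified Lean document; each statement's English description precedes it below -/
import Mathlib

section
/- Let n ≥ 1 and let Ω be the open ball in ℝⁿ of radius d/2 centered at 0. Let A : Ω → (0,∞) and f : Ω → ℝ be continuous radial functions, A(x) = Ã(‖x‖) and f(x) = f̃(‖x‖). Let u : Ω → ℝ be a radial C¹ function, u(x) = ũ(‖x‖) with ũ differentiable on (0, d/2), and suppose the vector field x ↦ A(x) ∇u(x) is C¹ on Ω with div( A(x) ∇u(x) ) = −f(x) for all x ∈ Ω. Then for every t ∈ (0, d/2): ũ'(t) = −(1/Ã(t)) ∫₀^t (s/t)^{n−1} f̃(s) ds. -/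
open MeasureTheory Metric Set

noncomputable section

abbrev Euc (n : ℕ) := EuclideanSpace ℝ (Fin n)

/-- The nonlocal functional `l_r(v)(x) = ∫_{Ω ∩ B̄(x,r)} g(y) v(y) dy`. -/
def lr {n : ℕ} (Ω : Set (Euc n)) (g : Euc n → ℝ) (r : ℝ) (v : Euc n → ℝ) (x : Euc n) : ℝ :=
  ∫ y in Ω ∩ closedBall x r, g y * v y

/-- Divergence of a vector field on `ℝⁿ`. -/
def diverg {n : ℕ} (F : Euc n → Euc n) (x : Euc n) : ℝ :=
  ∑ i, fderiv ℝ F x (EuclideanSpace.single i 1) i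

/-- A classical solution of the nonlocal parabolic problem
`∂ₜ u = div(a(l_r(u)) ∇u) + f` on the time interval `I`, vanishing on `I × ∂Ω`. -/
structure IsParabolicSol {n : ℕ} (Ω : Set (Euc n)) (g : Euc n → ℝ) (r : ℝ)
    (a : ℝ → ℝ) (f : ℝ → Euc n → ℝ) (I : Set ℝ) (u : ℝ → Euc n → ℝ) : Prop where
  cont : ContinuousOn (fun p : ℝ × Euc n => u p.1 p.2) (I ×ˢ closure Ω)
  bdry : ∀ t ∈ I, ∀ x ∈ frontier Ω, u t x = 0
  tdiff : ∀ t ∈ interior I, ∀ x ∈ Ω, DifferentiableAt ℝ (fun s => u s x) t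
  xreg : ∀ t ∈ interior I, ContDiffOn ℝ 2 (u t) Ω
  fdiff : ∀ t ∈ interior I, ∀ x ∈ Ω,
    DifferentiableAt ℝ (fun y => a (lr Ω g r (u t) y) • gradient (u t) y) x
  pde : ∀ t ∈ interior I, ∀ x ∈ Ω,
    deriv (fun s => u s x) t =
      diverg (fun y => a (lr Ω g r (u t) y) • gradient (u t) y) x + f t x

theorem hasFDerivAt_norm_aux {n : ℕ} (x : Euc n) (hx : x ≠ 0) :
    HasFDerivAt (fun y : Euc n => ‖y‖) (‖x‖⁻¹ • innerSL ℝ x) x := by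
  have h1 := (hasStrictFDerivAt_norm_sq x).hasFDerivAt
  have hpos : 0 < ‖x‖ := norm_pos_iff.mpr hx
  have h2 := h1.sqrt (by positivity)
  have h3 : (fun y : Euc n => √(‖y‖ ^ 2)) = fun y => ‖y‖ := by
    funext y; exact Real.sqrt_sq (norm_nonneg _)
  rw [h3] at h2
  have h4 : ‖x‖⁻¹ • innerSL ℝ x = (1 / (2 * √(‖x‖ ^ 2))) • 2 • innerSL ℝ x := by
    rw [Real.sqrt_sq hpos.le]
    ext v
    simp
    field_simp
  rw [h4]
  exact h2

theorem gradient_radial_aux {n : ℕ} (R : ℝ) (u : Euc n → ℝ) (util : ℝ → ℝ)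
    (hurad : ∀ x ∈ ball (0 : Euc n) R, u x = util ‖x‖)
    (hutil : ∀ t ∈ Ioo (0 : ℝ) R, DifferentiableAt ℝ util t)
    (x : Euc n) (hx : x ∈ ball (0 : Euc n) R) (hx0 : x ≠ 0) :
    gradient u x = (deriv util ‖x‖ * ‖x‖⁻¹) • x := by
  have hxR : ‖x‖ < R := by simpa using hx
  have h1 := (hutil ‖x‖ ⟨norm_pos_iff.mpr hx0, hxR⟩).hasDerivAt.comp_hasFDerivAt x
    (hasFDerivAt_norm_aux x hx0)
  have h2 : HasFDerivAt u (deriv util ‖x‖ • (‖x‖⁻¹ • innerSL ℝ x)) x := by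
    refine h1.congr_of_eventuallyEq ?_
    filter_upwards [isOpen_ball.mem_nhds hx] with y hy
    exact hurad y hy
  have h3 : HasGradientAt u ((deriv util ‖x‖ * ‖x‖⁻¹) • x) x := by
    rw [hasGradientAt_iff_hasFDerivAt]
    have h4 : InnerProductSpace.toDual ℝ (Euc n) ((deriv util ‖x‖ * ‖x‖⁻¹) • x) =
        deriv util ‖x‖ • (‖x‖⁻¹ • innerSL ℝ x) := by
      ext v
      simp [inner_smul_left, mul_assoc]
    rw [h4]
    exact h2
  exact h3.gradient

theorem gradient_zero_aux {n : ℕ} (R : ℝ) (hR : 0 < R) (u : Euc n → ℝ) (util : ℝ → ℝ)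
    (hurad : ∀ x ∈ ball (0 : Euc n) R, u x = util ‖x‖)
    (hd : DifferentiableAt ℝ u 0) :
    gradient u 0 = 0 := by
  have h1 : HasFDerivAt u (fderiv ℝ u 0) (-(0 : Euc n)) := by simpa using hd.hasFDerivAt
  have h2 := h1.comp (0 : Euc n) (hasFDerivAt_id (𝕜 := ℝ) (0 : Euc n)).neg
  have h3 : HasFDerivAt u ((fderiv ℝ u 0).comp (-ContinuousLinearMap.id ℝ (Euc n))) 0 := by
    refine h2.congr_of_eventuallyEq ?_
    filter_upwards [ball_mem_nhds (0 : Euc n) hR] with y hy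
    have hy' : -y ∈ ball (0 : Euc n) R := by simpa using hy
    simp [hurad y hy, hurad (-y) hy']
  have h4 : fderiv ℝ u 0 = 0 := by
    have h5 := h3.fderiv
    ext v
    have := DFunLike.congr_fun h5 v
    simp at this
    simp
    linarith
  simp [gradient, h4]

theorem diverg_radial_aux {n : ℕ} (F : Euc n → Euc n) (h : ℝ → ℝ) (x : Euc n) (hx : x ≠ 0)
    (hF : F =ᶠ[nhds x] fun y => h ‖y‖ • y) (hh : DifferentiableAt ℝ h ‖x‖) :
    diverg F x = n * h ‖x‖ + ‖x‖ * deriv h ‖x‖ := by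
  have h1 := hh.hasDerivAt.comp_hasFDerivAt x (hasFDerivAt_norm_aux x hx)
  have h2 := (h1.smul (hasFDerivAt_id (𝕜 := ℝ) x)).congr_of_eventuallyEq hF
  have hpos : 0 < ‖x‖ := norm_pos_iff.mpr hx
  have h3 : ∑ i, x i * x i = ‖x‖ ^ 2 := by
    rw [EuclideanSpace.real_norm_sq_eq]
    exact Finset.sum_congr rfl fun i _ => by ring
  unfold diverg
  rw [h2.fderiv]
  have h4 : ∀ i : Fin n, ((deriv h ‖x‖ * ‖x‖⁻¹) * (x i * x i) + h ‖x‖) =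
      ((h ‖x‖ • ContinuousLinearMap.id ℝ (Euc n) +
        (deriv h ‖x‖ • (‖x‖⁻¹ • innerSL ℝ x)).smulRight x) (EuclideanSpace.single i 1)) i := by
    intro i
    simp [EuclideanSpace.inner_single_right]
    ring
  have h5 := Finset.sum_congr (rfl : (Finset.univ : Finset (Fin n)) = Finset.univ)
    (fun i _ => h4 i)
  refine Eq.trans h5.symm ?_
  rw [Finset.sum_add_distrib, ← Finset.mul_sum, h3]
  simp
  field_simp
  ring

/-- the explicit formula `ũ'(t) = -(1/Ã(t)) ∫₀ᵗ (s/t)^{n-1} f̃(s) ds`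
for a radial solution of `-div(A ∇u) = f` on the ball of radius `d/2`. -/
theorem statement3 {n : ℕ} (hn : 1 ≤ n) (d : ℝ) (hd : 0 < d)
    (A f u : Euc n → ℝ) (Atil ftil util : ℝ → ℝ)
    (hAc : ContinuousOn A (ball (0 : Euc n) (d / 2)))
    (hfc : ContinuousOn f (ball (0 : Euc n) (d / 2)))
    (hApos : ∀ x ∈ ball (0 : Euc n) (d / 2), 0 < A x)
    (hArad : ∀ x ∈ ball (0 : Euc n) (d / 2), A x = Atil ‖x‖)
    (hfrad : ∀ x ∈ ball (0 : Euc n) (d / 2), f x = ftil ‖x‖)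
    (hurad : ∀ x ∈ ball (0 : Euc n) (d / 2), u x = util ‖x‖)
    (huC1 : ContDiffOn ℝ 1 u (ball (0 : Euc n) (d / 2)))
    (hutil : ∀ t ∈ Ioo (0 : ℝ) (d / 2), DifferentiableAt ℝ util t)
    (hFC1 : ContDiffOn ℝ 1 (fun x => A x • gradient u x) (ball (0 : Euc n) (d / 2)))
    (hpde : ∀ x ∈ ball (0 : Euc n) (d / 2),
      diverg (fun y => A y • gradient u y) x = -(f x)) :
    ∀ t ∈ Ioo (0 : ℝ) (d / 2),
      deriv util t = -(1 / Atil t) * ∫ s in (0:ℝ)..t, (s / t) ^ (n - 1) * ftil s := by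
  intro t ht
  have hR : 0 < d / 2 := by linarith
  set R := d / 2 with hRdef
  set F : Euc n → Euc n := fun x => A x • gradient u x with hFdef
  set h : ℝ → ℝ := fun s => Atil s * (deriv util s * s⁻¹) with hhdef
  let e : Euc n := EuclideanSpace.single ⟨0, hn⟩ 1
  have he : ‖e‖ = 1 := by simp [e]
  have hee : inner ℝ e e = (1 : ℝ) := by rw [real_inner_self_eq_norm_sq, he]; norm_num
  have hnorm : ∀ s : ℝ, 0 ≤ s → ‖s • e‖ = s := fun s hs => by
    rw [norm_smul, he, mul_one, Real.norm_of_nonneg hs]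
  have hmem : ∀ s : ℝ, 0 ≤ s → s < R → s • e ∈ ball (0 : Euc n) R := fun s hs hs' => by
    rw [mem_ball_zero_iff, hnorm s hs]; exact hs'
  have hFrad : ∀ x ∈ ball (0 : Euc n) R, x ≠ 0 → F x = h ‖x‖ • x := by
    intro x hx hx0
    simp only [hFdef, hhdef]
    rw [gradient_radial_aux R u util hurad hutil x hx hx0, hArad x hx, smul_smul]
  have hF0 : F 0 = 0 := by
    simp only [hFdef]
    rw [gradient_zero_aux R hR u util hurad
      ((huC1.contDiffAt (ball_mem_nhds _ hR)).differentiableAt one_ne_zero), smul_zero]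
  let G : ℝ → ℝ := fun s => inner ℝ e (F (s • e))
  have hG : ∀ s ∈ Ioo (0 : ℝ) R, G s = h s * s := by
    intro s hs
    have hne : s • e ≠ 0 := by
      rw [← norm_pos_iff, hnorm s hs.1.le]; exact hs.1
    simp only [G]
    rw [hFrad _ (hmem s hs.1.le hs.2) hne, hnorm s hs.1.le, inner_smul_right, inner_smul_right, hee,
      mul_one]
  have hGd : ∀ s ∈ Ico (0 : ℝ) R, DifferentiableAt ℝ G s := by
    intro s hs
    have h1 : DifferentiableAt ℝ F (s • e) :=
      (hFC1.contDiffAt (isOpen_ball.mem_nhds (hmem s hs.1 hs.2))).differentiableAt one_ne_zero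
    have h2 : DifferentiableAt ℝ (fun s : ℝ => s • e) s := by fun_prop
    have h3 : DifferentiableAt ℝ (fun s : ℝ => F (s • e)) s := DifferentiableAt.comp (g := F) s h1 h2
    exact (differentiableAt_const e).inner ℝ h3
  have hhd : ∀ s ∈ Ioo (0 : ℝ) R, DifferentiableAt ℝ h s := by
    intro s hs
    have h1 : DifferentiableAt ℝ (fun s => G s / s) s :=
      (hGd s ⟨hs.1.le, hs.2⟩).div differentiableAt_id hs.1.ne'
    refine h1.congr_of_eventuallyEq ?_
    filter_upwards [isOpen_Ioo.mem_nhds hs] with r hr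
    rw [hG r hr, mul_div_cancel_right₀ _ hr.1.ne']
  have hode : ∀ s ∈ Ioo (0 : ℝ) R, n * h s + s * deriv h s = - f (s • e) := by
    intro s hs
    have hne : s • e ≠ 0 := by
      rw [← norm_pos_iff, hnorm s hs.1.le]; exact hs.1
    have hm := hmem s hs.1.le hs.2
    have h1 := diverg_radial_aux F h (s • e) hne (by
      filter_upwards [isOpen_ball.mem_nhds hm, isOpen_ne.mem_nhds hne] with y hy hy0
      exact hFrad y hy hy0) (by rw [hnorm s hs.1.le]; exact hhd s hs)
    rw [hnorm s hs.1.le, hpde _ hm] at h1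
    exact h1.symm
  have hFTC : ∫ s in (0:ℝ)..t, s ^ (n - 1) * (- f (s • e)) =
      t ^ (n - 1) * G t - 0 ^ (n - 1) * G 0 := by
    refine intervalIntegral.integral_eq_sub_of_hasDerivAt_of_le
      (f := fun s => s ^ (n - 1) * G s) ht.1.le ?_ ?_ ?_
    · intro s hs
      have h1 := hGd s ⟨hs.1, lt_of_le_of_lt hs.2 ht.2⟩
      exact ((continuousAt_id.pow (n - 1)).mul h1.continuousAt).continuousWithinAt
    · intro s hs
      have hs' : s ∈ Ioo (0 : ℝ) R := ⟨hs.1, hs.2.trans ht.2⟩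
      have h1 : HasDerivAt (fun r => r ^ n * h r)
          (n * s ^ (n - 1) * h s + s ^ n * deriv h s) s :=
        (hasDerivAt_pow n s).mul (hhd s hs').hasDerivAt
      have hpow : ∀ r : ℝ, r ^ n = r ^ (n - 1) * r := fun r => by
        rw [← pow_succ, Nat.sub_add_cancel hn]
      have h2 : HasDerivAt (fun r => r ^ (n - 1) * G r)
          (n * s ^ (n - 1) * h s + s ^ n * deriv h s) s := by
        refine h1.congr_of_eventuallyEq ?_
        filter_upwards [isOpen_Ioo.mem_nhds hs'] with r hr
        rw [hG r hr, hpow r]; ring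
      have h3 : s ^ (n - 1) * (- f (s • e)) =
          n * s ^ (n - 1) * h s + s ^ n * deriv h s := by
        rw [← hode s hs', hpow s]; ring
      rw [h3]
      exact h2
    · apply ContinuousOn.intervalIntegrable
      rw [uIcc_of_le ht.1.le]
      have h1 : ContinuousOn (fun s : ℝ => f (s • e)) (Icc 0 t) :=
        hfc.comp (f := fun s : ℝ => s • e) (by fun_prop)
          (fun s hs => hmem s hs.1 (lt_of_le_of_lt hs.2 ht.2))
      exact (continuousOn_id.pow (n - 1)).mul h1.neg
  have hG0 : G 0 = 0 := by simp [G, hF0]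
  have hint : ∫ s in (0:ℝ)..t, (s / t) ^ (n - 1) * ftil s =
      -(t ^ (n - 1))⁻¹ * ∫ s in (0:ℝ)..t, s ^ (n - 1) * (- f (s • e)) := by
    rw [← intervalIntegral.integral_const_mul]
    refine intervalIntegral.integral_congr ?_
    intro s hs
    rw [uIcc_of_le ht.1.le] at hs
    have h1 := hfrad (s • e) (hmem s hs.1 (lt_of_le_of_lt hs.2 ht.2))
    rw [hnorm s hs.1] at h1
    simp only [h1, div_pow]
    ring
  have hA : 0 < Atil t := by
    have h1 := hApos _ (hmem t ht.1.le ht.2)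
    rwa [hArad _ (hmem t ht.1.le ht.2), hnorm t ht.1.le] at h1
  have ht0 : t ≠ 0 := ht.1.ne'
  rw [hint, hFTC, hG0, hG t ht]
  simp only [hhdef]
  field_simp
  ring
end
end

section
/- Let n ≥ 1 and let Ω be the open ball in ℝⁿ of radius d/2 centered at 0. Let A, B : Ω → (0,∞) be continuous radial functions with A(x) ≤ B(x) for all x ∈ Ω, and let f, h : Ω → ℝ be continuous nonnegative radial functions, f(x) = f̃(‖x‖), h(x) = h̃(‖x‖), A(x) = Ã(‖x‖), B(x) = B̃(‖x‖). Let u : Ω → ℝ be a radial C¹ function such that both vector fields x ↦ A(x)∇u(x) and x ↦ B(x)∇u(x) are C¹ on Ω, with div(A ∇u) = −f and div(B ∇u) = −h pointwise in Ω. Then for every t ∈ (0, d/2): B̃(t) ∫₀^t s^{n−1} f̃(s) ds = Ã(t) ∫₀^t s^{n−1} h̃(s) ds; in particular, ∫₀^t s^{n−1} h̃(s) ds ≥ ∫₀^t s^{n−1} f̃(s) ds for every t ∈ (0, d/2). -/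
open MeasureTheory Metric Set

noncomputable section

theorem aux_norm {n : ℕ} (x : Euc n) (hx : x ≠ 0) :
    HasFDerivAt (fun y : Euc n => ‖y‖) ((‖x‖)⁻¹ • innerSL ℝ x) x := by
  have hpos : 0 < ‖x‖ := norm_pos_iff.mpr hx
  have h1 := (hasStrictFDerivAt_norm_sq x).hasFDerivAt.sqrt (by positivity)
  have h2 : (fun y : Euc n => √(‖y‖ ^ 2)) = fun y => ‖y‖ := by
    funext y; exact Real.sqrt_sq (norm_nonneg y)
  rw [h2] at h1
  refine h1.congr_fderiv ?_
  ext v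
  simp only [Real.sqrt_sq (norm_nonneg x)]
  simp
  field_simp

theorem aux_ball {n : ℕ} {R : ℝ} (e : Euc n) (he : ‖e‖ = 1) (s : ℝ) (hs : 0 ≤ s) (hsR : s < R) :
    s • e ∈ ball (0 : Euc n) R := by
  rw [mem_ball_zero_iff, norm_smul, he, Real.norm_eq_abs, abs_of_nonneg hs]; linarith

theorem aux_grad {n : ℕ} {R : ℝ} (e : Euc n) (he : ‖e‖ = 1) (u : Euc n → ℝ) (util : ℝ → ℝ)
    (hurad : ∀ x ∈ ball (0 : Euc n) R, u x = util ‖x‖)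
    (hu : ∀ x ∈ ball (0 : Euc n) R, DifferentiableAt ℝ u x) (x : Euc n)
    (hx : x ∈ ball (0 : Euc n) R) (hx0 : x ≠ 0) :
    gradient u x = (inner ℝ (gradient u (‖x‖ • e)) e / ‖x‖) • x := by
  have hxR : ‖x‖ < R := by simpa using hx
  have hpos : 0 < ‖x‖ := norm_pos_iff.mpr hx0
  have hb := aux_ball e he ‖x‖ (norm_nonneg x) hxR
  have hd : HasFDerivAt u (fderiv ℝ u (‖x‖ • e)) (‖x‖ • e) := (hu _ hb).hasFDerivAt
  have hn : HasFDerivAt (fun y : Euc n => ‖y‖ • e) _ x := (aux_norm x hx0).smul_const e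
  have hc := HasFDerivAt.comp x hd hn
  have heq : (u ∘ fun y : Euc n => ‖y‖ • e) =ᶠ[nhds x] u := by
    filter_upwards [isOpen_ball.mem_nhds hx] with y hy
    have hyR : ‖y‖ < R := by simpa using hy
    rw [Function.comp, hurad _ (aux_ball e he ‖y‖ (norm_nonneg y) hyR), hurad y hy, norm_smul, he]
    simp
  have hc' := (hc.congr_of_eventuallyEq heq.symm).fderiv
  refine ext_inner_right ℝ fun v => ?_
  rw [gradient, InnerProductSpace.toDual_symm_apply, hc', inner_smul_left, gradient,
    InnerProductSpace.toDual_symm_apply]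
  simp
  field_simp

theorem aux_grad_zero {n : ℕ} {R : ℝ} (hR : 0 < R) (u : Euc n → ℝ) (util : ℝ → ℝ)
    (hurad : ∀ x ∈ ball (0 : Euc n) R, u x = util ‖x‖)
    (hu : ∀ x ∈ ball (0 : Euc n) R, DifferentiableAt ℝ u x) :
    gradient u 0 = 0 := by
  have h0 : (0 : Euc n) ∈ ball (0 : Euc n) R := mem_ball_self hR
  have hd := (hu _ h0).hasFDerivAt
  have hd' : HasFDerivAt u (fderiv ℝ u 0) (-(0 : Euc n)) := by simpa using hd
  have hc := HasFDerivAt.comp (0 : Euc n) hd' (hasFDerivAt_id (𝕜 := ℝ) (0 : Euc n)).neg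
  have heq : u =ᶠ[nhds 0] (u ∘ (-id)) := by
    filter_upwards [isOpen_ball.mem_nhds h0] with y hy
    have hy' : -y ∈ ball (0 : Euc n) R := by simpa using hy
    simp only [Function.comp, Pi.neg_apply, id]
    rw [hurad _ hy, hurad _ hy', norm_neg]
  have h2 := (hc.congr_of_eventuallyEq heq).unique hd
  have h3 : fderiv ℝ u 0 = 0 := by
    ext v
    have := congrArg (fun L => L v) h2
    simp at this
    simp
    linarith
  rw [gradient, h3, map_zero]

theorem aux_core {n : ℕ} (hn : 1 ≤ n) {R : ℝ} (e : Euc n) (he : ‖e‖ = 1) (F : Euc n → Euc n)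
    (f : Euc n → ℝ) (ftil : ℝ → ℝ)
    (hF : ∀ x ∈ ball (0 : Euc n) R, DifferentiableAt ℝ F x) (hF0 : F 0 = 0)
    (hFr : ∀ x ∈ ball (0 : Euc n) R, x ≠ 0 → F x = (inner ℝ (F (‖x‖ • e)) e / ‖x‖) • x)
    (hfc : ContinuousOn f (ball (0 : Euc n) R))
    (hfrad : ∀ x ∈ ball (0 : Euc n) R, f x = ftil ‖x‖)
    (hpde : ∀ x ∈ ball (0 : Euc n) R, diverg F x = -(f x)) (t : ℝ) (ht : t ∈ Ioo 0 R) :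
    ∫ s in (0:ℝ)..t, s ^ (n - 1) * ftil s = -(t ^ (n - 1) * inner ℝ (F (t • e)) e) := by
  obtain ⟨ht0, htR⟩ := ht
  have hne : e ≠ 0 := by rintro rfl; simp at he
  have hnorm : ∀ s : ℝ, 0 ≤ s → ‖s • e‖ = s := fun s hs => by
    rw [norm_smul, he, Real.norm_eq_abs, abs_of_nonneg hs, mul_one]
  have hline : ∀ s : ℝ, HasDerivAt (fun s : ℝ => s • e) e s := fun s => by
    simpa using (hasDerivAt_id s).smul_const e
  -- differentiability of the radial profile
  have hq : ∀ s : ℝ, 0 ≤ s → s < R →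
      DifferentiableAt ℝ (fun s : ℝ => inner ℝ (F (s • e)) e) s := fun s hs hsR =>
    DifferentiableAt.inner ℝ
      ((hF _ (aux_ball e he s hs hsR)).comp s (hline s).differentiableAt)
      (differentiableAt_const e)
  have hmaps : MapsTo (fun s : ℝ => s • e) (Icc 0 t) (ball (0 : Euc n) R) := fun s hs =>
    aux_ball e he s hs.1 (lt_of_le_of_lt hs.2 htR)
  have hint : ContinuousOn (fun s : ℝ => s ^ (n - 1) * ftil s) (Icc 0 t) := by
    have h1 : ContinuousOn (fun s : ℝ => s ^ (n - 1) * f (s • e)) (Icc 0 t) :=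
      (continuous_pow (n - 1)).continuousOn.mul
        (hfc.comp (by fun_prop) hmaps)
    refine h1.congr fun s hs => ?_
    simp only
    rw [hfrad _ (hmaps hs), hnorm s hs.1]
  have key := intervalIntegral.integral_eq_sub_of_hasDerivAt_of_le
    (f := fun s : ℝ => -(s ^ (n - 1) * inner ℝ (F (s • e)) e))
    (f' := fun s : ℝ => s ^ (n - 1) * ftil s) ht0.le ?_ ?_
    (ContinuousOn.intervalIntegrable (by rwa [uIcc_of_le ht0.le]))
  · rw [key]; simp [hF0]
  · refine ContinuousOn.neg ((continuous_pow (n - 1)).continuousOn.mul ?_)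
    exact fun s hs => (hq s hs.1 (lt_of_le_of_lt hs.2 htR)).continuousAt.continuousWithinAt
  · rintro s ⟨hs0, hst⟩
    have hsR : s < R := hst.trans htR
    have hxb := aux_ball e he s hs0.le hsR
    have hx0 : s • e ≠ 0 := smul_ne_zero hs0.ne' hne
    have hQ := (hq s hs0.le hsR).hasDerivAt
    set q : ℝ → ℝ := fun s : ℝ => inner ℝ (F (s • e)) e with hqdef
    set q' := deriv q s
    have hφ : HasDerivAt (fun s => q s / s) ((q' * s - q s * 1) / s ^ 2) ‖s • e‖ := by
      rw [hnorm s hs0.le]; exact hQ.div (hasDerivAt_id s) hs0.ne'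
    have hc := hφ.comp_hasFDerivAt (s • e) (aux_norm (s • e) hx0)
    have hG := hc.smul (hasFDerivAt_id (𝕜 := ℝ) (s • e))
    have hFd : HasFDerivAt F _ (s • e) := hG.congr_of_eventuallyEq (by
      filter_upwards [isOpen_ball.mem_nhds hxb, isOpen_ne.mem_nhds hx0] with y hy hy0
      simpa using hFr y hy hy0)
    have hdiv := hpde _ hxb
    rw [hfrad _ hxb, hnorm s hs0.le, diverg, hFd.fderiv] at hdiv
    have hsum : ∑ i, e i ^ 2 = 1 := by
      have := EuclideanSpace.norm_sq_eq e
      rw [he] at this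
      simpa using this.symm
    have hdiv2 : (q' * s - q s) / s + n * (q s / s) = - ftil s := by
      rw [← hdiv]
      simp [hnorm s hs0.le, Finset.sum_add_distrib]
      rw [add_comm]
      congr 1
      have hterm : ∀ i : Fin n, (q' * s - q s) / s ^ 2 *
          (s⁻¹ * (s * inner ℝ e (EuclideanSpace.single i 1))) * (s * e i)
          = (q' * s - q s) / s * e i ^ 2 := fun i => by
        rw [EuclideanSpace.inner_single_right]
        simp
        field_simp
      rw [Finset.sum_congr rfl fun i _ => hterm i, ← Finset.mul_sum, hsum, mul_one]
    have hpow := (((hasDerivAt_pow (n - 1) s).mul hQ).neg)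
    refine hpow.congr_deriv ?_
    have hf' : ftil s = -((q' * s - q s) / s + n * (q s / s)) := by linarith
    rw [hf']
    obtain ⟨m, rfl⟩ : ∃ m, n = m + 1 := ⟨n - 1, by omega⟩
    rcases m with _ | m
    · simp; field_simp; ring
    · simp [pow_succ]; field_simp; ring

/-- comparison of right-hand sides for two radial diffusion equations with
ordered coefficients `A ≤ B` and the same radial solution `u`. -/
theorem statement4 {n : ℕ} (hn : 1 ≤ n) (d : ℝ) (hd : 0 < d)
    (A B f h u : Euc n → ℝ) (Atil Btil ftil htil util : ℝ → ℝ)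
    (hAc : ContinuousOn A (ball (0 : Euc n) (d / 2)))
    (hBc : ContinuousOn B (ball (0 : Euc n) (d / 2)))
    (hfc : ContinuousOn f (ball (0 : Euc n) (d / 2)))
    (hhc : ContinuousOn h (ball (0 : Euc n) (d / 2)))
    (hApos : ∀ x ∈ ball (0 : Euc n) (d / 2), 0 < A x)
    (hBpos : ∀ x ∈ ball (0 : Euc n) (d / 2), 0 < B x)
    (hAB : ∀ x ∈ ball (0 : Euc n) (d / 2), A x ≤ B x)
    (hfpos : ∀ x ∈ ball (0 : Euc n) (d / 2), 0 ≤ f x)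
    (hhpos : ∀ x ∈ ball (0 : Euc n) (d / 2), 0 ≤ h x)
    (hArad : ∀ x ∈ ball (0 : Euc n) (d / 2), A x = Atil ‖x‖)
    (hBrad : ∀ x ∈ ball (0 : Euc n) (d / 2), B x = Btil ‖x‖)
    (hfrad : ∀ x ∈ ball (0 : Euc n) (d / 2), f x = ftil ‖x‖)
    (hhrad : ∀ x ∈ ball (0 : Euc n) (d / 2), h x = htil ‖x‖)
    (hurad : ∀ x ∈ ball (0 : Euc n) (d / 2), u x = util ‖x‖)
    (huC1 : ContDiffOn ℝ 1 u (ball (0 : Euc n) (d / 2)))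
    (hFAC1 : ContDiffOn ℝ 1 (fun x => A x • gradient u x) (ball (0 : Euc n) (d / 2)))
    (hFBC1 : ContDiffOn ℝ 1 (fun x => B x • gradient u x) (ball (0 : Euc n) (d / 2)))
    (hpdeA : ∀ x ∈ ball (0 : Euc n) (d / 2),
      diverg (fun y => A y • gradient u y) x = -(f x))
    (hpdeB : ∀ x ∈ ball (0 : Euc n) (d / 2),
      diverg (fun y => B y • gradient u y) x = -(h x)) :
    ∀ t ∈ Ioo (0 : ℝ) (d / 2),
      Btil t * (∫ s in (0:ℝ)..t, s ^ (n - 1) * ftil s)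
        = Atil t * (∫ s in (0:ℝ)..t, s ^ (n - 1) * htil s) ∧
      (∫ s in (0:ℝ)..t, s ^ (n - 1) * ftil s) ≤ ∫ s in (0:ℝ)..t, s ^ (n - 1) * htil s := by
  intro t ht
  set e : Euc n := EuclideanSpace.single ⟨0, hn⟩ 1 with he_def
  have he : ‖e‖ = 1 := by simp [he_def]
  have hR : 0 < d / 2 := by linarith
  have hu : ∀ x ∈ ball (0 : Euc n) (d / 2), DifferentiableAt ℝ u x := fun x hx =>
    (huC1.differentiableOn (by norm_num)).differentiableAt (isOpen_ball.mem_nhds hx)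
  have hg0 := aux_grad_zero hR u util hurad hu
  have main : ∀ (C g : Euc n → ℝ) (Ctil gtil : ℝ → ℝ),
      (∀ x ∈ ball (0 : Euc n) (d / 2), C x = Ctil ‖x‖) →
      (∀ x ∈ ball (0 : Euc n) (d / 2), g x = gtil ‖x‖) →
      ContinuousOn g (ball (0 : Euc n) (d / 2)) →
      ContDiffOn ℝ 1 (fun x => C x • gradient u x) (ball (0 : Euc n) (d / 2)) →
      (∀ x ∈ ball (0 : Euc n) (d / 2), diverg (fun y => C y • gradient u y) x = -(g x)) →
      ∫ s in (0:ℝ)..t, s ^ (n - 1) * gtil s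
        = -(t ^ (n - 1) * (Ctil t * inner ℝ (gradient u (t • e)) e)) := by
    intro C g Ctil gtil hC hg hgc hFC hpde
    have h := aux_core hn e he (fun x => C x • gradient u x) g gtil
      (fun x hx => (hFC.differentiableOn (by norm_num)).differentiableAt
        (isOpen_ball.mem_nhds hx)) (by simp [hg0]) ?_ hgc hg hpde t ht
    · rw [h, inner_smul_left, hC _ (aux_ball e he t ht.1.le ht.2), norm_smul, he,
        Real.norm_eq_abs, abs_of_pos ht.1]
      simp
    · intro x hx hx0
      have hxR : ‖x‖ < d / 2 := by simpa using hx
      rw [inner_smul_left, hC _ (aux_ball e he ‖x‖ (norm_nonneg x) hxR), hC x hx, norm_smul, he]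
      conv_lhs => rw [aux_grad e he u util hurad hu x hx hx0]
      rw [smul_smul]
      congr 1
      simp
      ring
  have hIf := main A f Atil ftil hArad hfrad hfc hFAC1 hpdeA
  have hIh := main B h Btil htil hBrad hhrad hhc hFBC1 hpdeB
  have hb := aux_ball e he t ht.1.le ht.2
  have hnt : ‖t • e‖ = t := by rw [norm_smul, he, Real.norm_eq_abs, abs_of_pos ht.1, mul_one]
  have hA := hApos _ hb
  have hABt := hAB _ hb
  rw [hArad _ hb, hnt] at hA hABt
  rw [hBrad _ hb, hnt] at hABt
  have heq : Btil t * (∫ s in (0:ℝ)..t, s ^ (n - 1) * ftil s)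
        = Atil t * (∫ s in (0:ℝ)..t, s ^ (n - 1) * htil s) := by
    rw [hIf, hIh]; ring
  refine ⟨heq, ?_⟩
  have hnn : 0 ≤ ∫ s in (0:ℝ)..t, s ^ (n - 1) * ftil s := by
    refine intervalIntegral.integral_nonneg ht.1.le fun s hs => ?_
    have hsb := aux_ball e he s hs.1 (lt_of_le_of_lt hs.2 ht.2)
    have h1 := hfpos _ hsb
    rw [hfrad _ hsb, norm_smul, he, Real.norm_eq_abs, abs_of_nonneg hs.1, mul_one] at h1
    exact mul_nonneg (pow_nonneg hs.1 _) h1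
  refine le_of_mul_le_mul_left ?_ hA
  rw [← heq]
  exact mul_le_mul_of_nonneg_right hABt hnn
end
end
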